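/- arXiv:2203.06005 — 2 statements merged into one kernel-verified Lean document; each statement's English description precedes it below -/
import Mathlib

section
/- Let R be a right semiartinian ring and M a finitely generated weakly R-projective right R-module. Then M is projective. -/
universe u

open Submodule Function

/-- The socle of a module: the supremum of all simple submodules. -/
def moduleSocle (R : Type*) (M : Type*) [Ring R] [AddCommGroup M] [Module R M] :
    Submodule R M :=
  sSup {W : Submodule R M | IsSimpleModule R ↥W}

/-- A ring is right semiartinian if every nonzero quotient of the right module `R_R`
has a nonzero socle. -/
def IsRightSemiartinian (R : Type u) [Ring R] : Prop :=
  ∀ I : Submodule Rᵐᵒᵖ R, I ≠ ⊤ → moduleSocle Rᵐᵒᵖ (R ⧸ I) ≠ ⊥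

/-- The right socle sequence of a ring: `S_0 = 0`, `S_{α+1}/S_α = Soc(R/S_α)`,
and unions at limits. -/
noncomputable def socleSeq (R : Type u) [Ring R] : Ordinal.{u} → Submodule Rᵐᵒᵖ R :=
  fun o => Ordinal.limitRecOn o ⊥
    (fun _ S => Submodule.comap S.mkQ (moduleSocle Rᵐᵒᵖ (R ⧸ S)))
    (fun o _ ih => ⨆ (β : Ordinal.{u}) (h : β < o), ih β h)

/-- `S_α`, viewed as a submodule of `S_{α+1}`; the kernel of the `α`-th layer
epimorphism `π_α : S_{α+1} → S_{α+1}/S_α`. -/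
noncomputable def layerKer (R : Type u) [Ring R] (α : Ordinal.{u}) :
    Submodule Rᵐᵒᵖ ↥(socleSeq R (α + 1)) :=
  (socleSeq R α).comap (socleSeq R (α + 1)).subtype

/-- The `α`-th layer `L_α = S_{α+1}/S_α` of a ring. -/
noncomputable abbrev Layer (R : Type u) [Ring R] (α : Ordinal.{u}) :=
  ↥(socleSeq R (α + 1)) ⧸ layerKer R α

/-- A module `M` is weakly `R`-projective if for each `0 < α ≤ σ`, every homomorphism
`f : M → L_α` with finitely generated image factors through the `α`-th layer
epimorphism `π_α : S_{α+1} → L_α`. -/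
def WeaklyRProjective (R : Type u) [Ring R] (σ : Ordinal.{u})
    (M : Type u) [AddCommGroup M] [Module Rᵐᵒᵖ M] : Prop :=
  ∀ α : Ordinal.{u}, 0 < α → α ≤ σ →
    ∀ f : M →ₗ[Rᵐᵒᵖ] Layer R α, (LinearMap.range f).FG →
      ∃ g : M →ₗ[Rᵐᵒᵖ] ↥(socleSeq R (α + 1)), (layerKer R α).mkQ ∘ₗ g = f

/-- A ring is von Neumann regular if each `r` admits `s` with `r * s * r = r`. -/
def IsVNRegular (R : Type u) [Ring R] : Prop :=
  ∀ r : R, ∃ s : R, r * s * r = r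

/-- The annihilator of a right `R`-module, as a submodule of the right module `R_R`. -/
def rightAnnihilator (R : Type u) [Ring R] (M : Type u) [AddCommGroup M]
    [Module Rᵐᵒᵖ M] : Submodule Rᵐᵒᵖ R where
  carrier := {r : R | ∀ m : M, MulOpposite.op r • m = 0}
  add_mem' := by
    intro a b ha hb m
    rw [MulOpposite.op_add, add_smul, ha m, hb m, add_zero]
  zero_mem' := by
    intro m
    rw [MulOpposite.op_zero, zero_smul]
  smul_mem' := by
    intro c r hr m
    have h : MulOpposite.op (c • r) = c * MulOpposite.op r := by
      rw [MulOpposite.smul_eq_mul_unop, MulOpposite.op_mul, MulOpposite.op_unop]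
    rw [h, mul_smul, hr m, smul_zero]

/-- A ring has (right) primitive factors artinian if, for each right primitive
(two-sided) ideal `P`, i.e. the annihilator of a simple right module, the factor
`R/P` is (right) artinian. -/
def HasPFA (R : Type u) [Ring R] : Prop :=
  ∀ (M : Type u) [AddCommGroup M] [Module Rᵐᵒᵖ M], IsSimpleModule Rᵐᵒᵖ M →
    IsArtinian Rᵐᵒᵖ (R ⧸ rightAnnihilator R M)

/-!
Call `M` relatively `P`-projective if maps from `M` into quotients of `P` lift to `P`. In an
exact sequence `0 → P' → P → P'' → 0` the property passes from `P'` and `P''` to `P` as soon as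
every map `M → P''` lifts to `P`, and for finitely generated `M` it passes to directed unions.
Weak `R`-projectivity provides exactly the lifts along the layers of the socle sequence (at the
bottom layer there is nothing to lift), and `M` is projective relative to every layer because
layers are semisimple. Climbing the sequence by transfinite induction, `M` is projective relative
to `S_{σ+1} = R`, hence relative to every finite free module; lifting the identity along a finite
free cover of `M` splits the cover.
-/

section RelativelyProjective

/-- `M` is relatively `P`-projective: every homomorphism from `M` to a quotient of `P` lifts to `P`.
Quantifying over submodules of `P` rather than over epimorphisms out of `P` keeps the notion
independent of universes. -/
def RelativelyProjective (A M P : Type*) [Ring A] [AddCommGroup M] [Module A M]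
    [AddCommGroup P] [Module A P] : Prop :=
  ∀ (K : Submodule A P) (f : M →ₗ[A] P ⧸ K), ∃ g : M →ₗ[A] P, K.mkQ ∘ₗ g = f

variable {A M P P' P'' : Type*} [Ring A] [AddCommGroup M] [Module A M]
  [AddCommGroup P] [Module A P] [AddCommGroup P'] [Module A P'] [AddCommGroup P''] [Module A P'']

namespace RelativelyProjective

theorem exists_comp_eq_of_range_le {N : Type*} [AddCommGroup N] [Module A N]
    (h : RelativelyProjective A M P) (φ : P →ₗ[A] N) (f : M →ₗ[A] N)
    (hf : LinearMap.range f ≤ LinearMap.range φ) : ∃ g : M →ₗ[A] P, φ ∘ₗ g = f := by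
  let f' : M →ₗ[A] LinearMap.range φ := f.codRestrict _ fun m ↦ hf ⟨m, rfl⟩
  obtain ⟨g, hg⟩ := h (LinearMap.ker φ) (φ.quotKerEquivRange.symm ∘ₗ f')
  refine ⟨g, LinearMap.ext fun m ↦ ?_⟩
  have hgm : φ.quotKerEquivRange ((LinearMap.ker φ).mkQ (g m)) = f' m :=
    (LinearEquiv.eq_symm_apply _).1 (LinearMap.congr_fun hg m)
  exact congrArg Subtype.val hgm

theorem of_surjective (p : P →ₗ[A] P') (hp : Surjective p) (h : RelativelyProjective A M P) :
    RelativelyProjective A M P' := by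
  intro K f
  have hKp : LinearMap.range (K.mkQ ∘ₗ p) = ⊤ :=
    LinearMap.range_eq_top.2 (K.mkQ_surjective.comp hp)
  obtain ⟨g, hg⟩ := h.exists_comp_eq_of_range_le (K.mkQ ∘ₗ p) f (hKp ▸ le_top)
  exact ⟨p ∘ₗ g, hg⟩

theorem of_subsingleton [Subsingleton P] : RelativelyProjective A M P :=
  fun _ _ ↦ ⟨0, LinearMap.ext fun _ ↦ Subsingleton.elim _ _⟩

theorem of_isSemisimpleModule [IsSemisimpleModule A P] : RelativelyProjective A M P :=
  fun K f ↦ IsSemisimpleModule.lifting_property K.mkQ K.mkQ_surjective f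

theorem of_exact {i : P' →ₗ[A] P} {p : P →ₗ[A] P''} (hip : Exact i p)
    (h' : RelativelyProjective A M P') (h'' : RelativelyProjective A M P'')
    (hlift : ∀ f : M →ₗ[A] P'', ∃ g : M →ₗ[A] P, p ∘ₗ g = f) : RelativelyProjective A M P := by
  intro K f
  let q : P ⧸ K →ₗ[A] P'' ⧸ K.map p := K.mapQ (K.map p) p (K.le_comap_map p)
  have hker : LinearMap.ker q ≤ LinearMap.range (K.mkQ ∘ₗ i) := by
    rw [ker_mapQ, comap_map_eq, Submodule.map_sup, mkQ_map_self, bot_sup_eq, hip.linearMap_ker_eq,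
      LinearMap.range_comp]
  obtain ⟨f'', hf''⟩ := h'' (K.map p) (q ∘ₗ f)
  obtain ⟨g, rfl⟩ := hlift f''
  have hdiff : LinearMap.range (f - K.mkQ ∘ₗ g) ≤ LinearMap.ker q := by
    rw [LinearMap.range_le_ker_iff, LinearMap.comp_sub, ← hf'', sub_eq_zero]
    rfl
  obtain ⟨g', hg'⟩ := h'.exists_comp_eq_of_range_le (K.mkQ ∘ₗ i) _ (hdiff.trans hker)
  refine ⟨i ∘ₗ g' + g, ?_⟩
  rw [LinearMap.comp_add, ← LinearMap.comp_assoc, hg', sub_add_cancel]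

theorem prod (h : RelativelyProjective A M P) (h' : RelativelyProjective A M P') :
    RelativelyProjective A M (P × P') :=
  of_exact .inl_snd h h' fun f ↦ ⟨LinearMap.inr A P P' ∘ₗ f, rfl⟩

theorem pi_fin (h : RelativelyProjective A M P) (n : ℕ) :
    RelativelyProjective A M (Fin n → P) := by
  induction n with
  | zero => exact of_subsingleton
  | succ n ih =>
    exact of_surjective (Fin.consLinearEquiv A fun _ ↦ P).toLinearMap
      (LinearEquiv.surjective _) (h.prod ih)

theorem projective [Module.Finite A M] (h : RelativelyProjective A M A) :
    Module.Projective A M := by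
  obtain ⟨n, φ, hφ⟩ := Module.Finite.exists_fin' A M
  obtain ⟨g, hg⟩ := (h.pi_fin n).exists_comp_eq_of_range_le φ LinearMap.id
    (LinearMap.range_eq_top.2 hφ ▸ le_top)
  exact Module.Projective.of_split g φ hg

end RelativelyProjective

theorem exists_le_of_fg_of_le_iSup_of_directed {ι : Type*} [Nonempty ι] {N : Submodule A P}
    {S : ι → Submodule A P} (hN : N.FG) (hS : Directed (· ≤ ·) S) (hle : N ≤ ⨆ i, S i) :
    ∃ i, N ≤ S i := by
  obtain ⟨_, ⟨i, rfl⟩, hi⟩ :=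
    (CompleteLattice.isCompactElement_iff_le_of_directed_sSup_le _ N).1 (N.fg_iff_compact.1 hN)
      (Set.range S) (Set.range_nonempty S) hS.directedOn_range hle
  exact ⟨i, hi⟩

theorem RelativelyProjective.iSup_of_directed [Module.Finite A M] {ι : Type*} [Nonempty ι]
    {S : ι → Submodule A P} (hS : Directed (· ≤ ·) S)
    (h : ∀ i, RelativelyProjective A M (S i)) :
    RelativelyProjective A M ↥(⨆ i, S i) := by
  intro K f
  let T (i : ι) : Submodule A (↥(⨆ i, S i) ⧸ K) := ((S i).submoduleOf (⨆ i, S i)).map K.mkQ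
  have hT : Directed (· ≤ ·) T :=
    hS.mono_comp (g := fun U ↦ (U.submoduleOf (⨆ i, S i)).map K.mkQ) (· ≤ ·)
      fun _ _ hUV ↦ map_mono (comap_mono hUV)
  have hT_top : ⨆ i, T i = ⊤ := by
    refine eq_top_iff.2 fun y _ ↦ ?_
    obtain ⟨x, rfl⟩ := K.mkQ_surjective y
    obtain ⟨i, hi⟩ := (mem_iSup_of_directed S hS).1 x.2
    exact mem_iSup_of_mem i ⟨x, hi, rfl⟩
  obtain ⟨i, hi⟩ := exists_le_of_fg_of_le_iSup_of_directed (fg_range f) hT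
    (hT_top ▸ le_top)
  let j : S i →ₗ[A] ↥(⨆ i, S i) := inclusion (le_iSup S i)
  have hrange : LinearMap.range (K.mkQ ∘ₗ j) = T i := by
    rw [LinearMap.range_comp, range_inclusion]
    rfl
  obtain ⟨g, hg⟩ := (h i).exists_comp_eq_of_range_le (K.mkQ ∘ₗ j) f (hrange ▸ hi)
  exact ⟨j ∘ₗ g, hg⟩

end RelativelyProjective

theorem isSemisimpleModule_moduleSocle (A M : Type*) [Ring A] [AddCommGroup M] [Module A M] :
    IsSemisimpleModule A (moduleSocle A M) := by
  rw [moduleSocle, sSup_eq_iSup]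
  exact isSemisimpleModule_biSup_of_isSemisimpleModule_submodule
    fun W (hW : IsSimpleModule A W) ↦ inferInstance

section SocleSequence

variable (R : Type u) [Ring R]

theorem socleSeq_zero : socleSeq R 0 = ⊥ :=
  Ordinal.limitRecOn_zero _ _ _

theorem socleSeq_add_one (α : Ordinal.{u}) :
    socleSeq R (α + 1) = (moduleSocle Rᵐᵒᵖ (R ⧸ socleSeq R α)).comap (socleSeq R α).mkQ :=
  Ordinal.limitRecOn_add_one _ _ _ _

theorem socleSeq_of_isSuccLimit {α : Ordinal.{u}} (hα : Order.IsSuccLimit α) :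
    socleSeq R α = ⨆ β : Set.Iio α, socleSeq R β :=
  (Ordinal.limitRecOn_limit _ _ _ _ hα).trans iSup_subtype'

theorem socleSeq_le_add_one (α : Ordinal.{u}) : socleSeq R α ≤ socleSeq R (α + 1) := by
  rw [socleSeq_add_one]
  exact (socleSeq R α).le_comap_mkQ _

theorem socleSeq_monotone : Monotone (socleSeq R) := by
  intro β α
  induction α using Ordinal.limitRecOn with
  | zero => exact fun hβ ↦ nonpos_iff_eq_zero.1 hβ ▸ le_rfl
  | add_one α ih =>
    intro hβ
    rcases hβ.lt_or_eq with h | rfl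
    · exact (ih (Order.lt_add_one_iff.1 h)).trans (socleSeq_le_add_one R α)
    · exact le_rfl
  | limit α hα _ =>
    intro hβ
    rcases hβ.lt_or_eq with h | rfl
    · rw [socleSeq_of_isSuccLimit R hα]
      exact le_iSup (fun γ : Set.Iio α ↦ socleSeq R γ) ⟨β, h⟩
    · exact le_rfl

theorem layerKer_zero : layerKer R 0 = ⊥ := by
  rw [layerKer, socleSeq_zero, comap_bot, ker_subtype]

theorem isSemisimpleModule_layer (α : Ordinal.{u}) : IsSemisimpleModule Rᵐᵒᵖ (Layer R α) := by
  have := isSemisimpleModule_moduleSocle Rᵐᵒᵖ (R ⧸ socleSeq R α)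
  let j : socleSeq R (α + 1) →ₗ[Rᵐᵒᵖ] moduleSocle Rᵐᵒᵖ (R ⧸ socleSeq R α) :=
    ((socleSeq R α).mkQ ∘ₗ (socleSeq R (α + 1)).subtype).codRestrict _
      fun x ↦ (socleSeq_add_one R α).le x.2
  have hj : layerKer R α = LinearMap.ker j := by
    rw [LinearMap.ker_codRestrict, LinearMap.ker_comp, ker_mkQ, layerKer]
  exact .of_injective ((layerKer R α).liftQ j hj.le)
    (LinearMap.ker_eq_bot.1 (ker_liftQ_eq_bot' _ _ hj))

theorem exact_inclusion_layerKer_mkQ (α : Ordinal.{u}) :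
    Exact (inclusion (socleSeq_le_add_one R α)) (layerKer R α).mkQ := by
  rw [LinearMap.exact_iff, ker_mkQ, range_inclusion, layerKer]

end SocleSequence

section WeaklyRProjective

variable {R : Type u} [Ring R] {σ α : Ordinal.{u}}
  {M : Type u} [AddCommGroup M] [Module Rᵐᵒᵖ M] [Module.Finite Rᵐᵒᵖ M]

theorem WeaklyRProjective.exists_layer_lift (hM : WeaklyRProjective R σ M) (hα : α ≤ σ)
    (f : M →ₗ[Rᵐᵒᵖ] Layer R α) :
    ∃ g : M →ₗ[Rᵐᵒᵖ] socleSeq R (α + 1), (layerKer R α).mkQ ∘ₗ g = f := by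
  rcases eq_zero_or_pos α with rfl | hpos
  · let e := quotEquivOfEqBot (layerKer R 0) (layerKer_zero R)
    exact ⟨e.toLinearMap ∘ₗ f, LinearMap.ext fun m ↦ e.symm_apply_apply (f m)⟩
  · exact hM α hpos hα f (fg_range f)

theorem WeaklyRProjective.relativelyProjective_socleSeq (hM : WeaklyRProjective R σ M)
    (hα : α ≤ σ + 1) : RelativelyProjective Rᵐᵒᵖ M (socleSeq R α) := by
  induction α using Ordinal.limitRecOn with
  | zero =>
    rw [socleSeq_zero]
    exact .of_subsingleton
  | add_one β ih =>
    have hβ : β ≤ σ := Order.lt_add_one_iff.1 (Order.add_one_le_iff.1 hα)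
    have := isSemisimpleModule_layer R β
    exact .of_exact (exact_inclusion_layerKer_mkQ R β) (ih (hβ.trans (le_self_add)))
      .of_isSemisimpleModule (hM.exists_layer_lift hβ)
  | limit α hlim ih =>
    rw [socleSeq_of_isSuccLimit R hlim]
    have : Nonempty (Set.Iio α) := ⟨⟨0, hlim.bot_lt⟩⟩
    have hdir : Directed (· ≤ ·) fun β : Set.Iio α ↦ socleSeq R β :=
      ((socleSeq_monotone R).comp (Subtype.mono_coe _)).directed_le
    exact .iSup_of_directed hdir fun β ↦ ih β β.2 (β.2.le.trans hα)

end WeaklyRProjective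

/-- Corollary 6 of the paper: over a right semiartinian ring,
every finitely generated weakly `R`-projective module is projective. -/
theorem projective_of_fg_weaklyRProjective (R : Type u) [Ring R]
    (hsa : IsRightSemiartinian R)
    (σ : Ordinal.{u}) (hσ : IsLeast {o : Ordinal.{u} | socleSeq R o = ⊤} (σ + 1))
    (M : Type u) [AddCommGroup M] [Module Rᵐᵒᵖ M] [Module.Finite Rᵐᵒᵖ M]
    (hM : WeaklyRProjective R σ M) :
    Module.Projective Rᵐᵒᵖ M := by
  have hR : RelativelyProjective Rᵐᵒᵖ M (⊤ : Submodule Rᵐᵒᵖ R) :=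
    hσ.1 ▸ hM.relativelyProjective_socleSeq le_rfl
  let e : (⊤ : Submodule Rᵐᵒᵖ R) ≃ₗ[Rᵐᵒᵖ] Rᵐᵒᵖ := topEquiv ≪≫ₗ MulOpposite.opLinearEquiv Rᵐᵒᵖ
  exact (hR.of_surjective e.toLinearMap e.surjective).projective
end

section
/- Let R be a von Neumann regular right semiartinian ring whose right socle Soc(R) is countably generated. Then every right ideal of R that is projective as a right R-module is countably generated. -/
universe u

open Submodule Function

/-!
A projective module `P` is a direct summand of the free module on its own elements, via a section
`s : P → (P →₀ A)`. Closing a set of elements under taking supports of values of `s` (Kaplansky's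
argument) puts any submodule of `P` inside a direct summand with no more generators, up to `ℵ₀`.
Apply this to the socle: a complement of the summand meets the socle trivially, hence vanishes as
soon as every nonzero submodule contains a simple one. So `P` needs no more generators than its
socle, and the socle of a submodule, being a direct summand of the ambient socle, needs no more
generators than that one.
-/

open Cardinal

section Cardinality

variable {α : Type*}

theorem exists_superset_closed_mk_le (f : α → Set α) (hf : ∀ a, (f a).Countable) (S : Set α) :
    ∃ T, S ⊆ T ∧ #T ≤ max ℵ₀ #S ∧ ∀ a ∈ T, f a ⊆ T := by
  let expand : Set α → Set α := fun X => ⋃ a ∈ X, f a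
  have expand_iterate_succ (n : ℕ) : expand^[n + 1] S = expand (expand^[n] S) :=
    iterate_succ_apply' expand n S
  have mk_iterate_le (n : ℕ) : #(expand^[n] S : Set α) ≤ max ℵ₀ #S := by
    induction n with
    | zero => exact le_max_right _ _
    | succ n ih =>
      rw [expand_iterate_succ]
      calc #(expand (expand^[n] S))
          ≤ #(expand^[n] S : Set α) * ⨆ a : (expand^[n] S : Set α), #(f a) := mk_biUnion_le _ _
        _ ≤ max ℵ₀ #S * ℵ₀ :=
          mul_le_mul' ih (ciSup_le' fun a => le_aleph0_iff_set_countable.2 (hf a))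
        _ = max ℵ₀ #S := mul_aleph0_eq (le_max_left _ _)
  refine ⟨⋃ n, expand^[n] S, Set.subset_iUnion (fun n => expand^[n] S) 0, ?_, ?_⟩
  · calc #(⋃ n, expand^[n] S : Set α)
        = lift.{0} #(⋃ n, expand^[n] S : Set α) := (lift_uzero _).symm
      _ ≤ lift #ℕ * ⨆ n, lift.{0} #(expand^[n] S : Set α) := mk_iUnion_le_lift _
      _ ≤ ℵ₀ * max ℵ₀ #S := by
        simpa using mul_le_mul_right (ciSup_le' mk_iterate_le) ℵ₀
      _ = max ℵ₀ #S := aleph0_mul_eq (le_max_left _ _)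
  · intro a ha
    obtain ⟨n, han⟩ := Set.mem_iUnion.1 ha
    refine Set.subset_iUnion_of_subset (n + 1) ?_
    rw [expand_iterate_succ]
    exact Set.subset_biUnion_of_mem han

end Cardinality

section Projective

variable {A P : Type*} [Ring A] [AddCommGroup P] [Module A P]

theorem isComplemented_span_of_support_subset {s : P →ₗ[A] P →₀ A}
    (hs : LeftInverse (Finsupp.linearCombination A id) s) {T : Set P}
    (hT : ∀ t ∈ T, ((s t).support : Set P) ⊆ T) : IsComplemented (span A T) := by
  classical
  have map_mem_supported : ∀ x ∈ span A T, s x ∈ Finsupp.supported A A T :=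
    span_le (p := (Finsupp.supported A A T).comap s).2 hT
  let truncate : (P →₀ A) →ₗ[A] P →₀ A :=
    (Finsupp.supported A A T).subtype ∘ₗ Finsupp.restrictDom A A T
  let φ : P →ₗ[A] P := Finsupp.linearCombination A id ∘ₗ truncate ∘ₗ s
  have hφ : LinearMap.IsProj (span A T) φ :=
    { map_mem := fun x => by
        rw [← Set.image_id T]
        exact (Finsupp.mem_span_image_iff_linearCombination A).2
          ⟨truncate (s x), (Finsupp.restrictDom A A T (s x)).2, rfl⟩
      map_id := fun x hx => by
        have truncate_eq : truncate (s x) = s x :=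
          congrArg Subtype.val
            (LinearMap.congr_fun (Finsupp.restrictDom_comp_subtype T) ⟨s x, map_mem_supported x hx⟩)
        calc φ x = Finsupp.linearCombination A id (s x) :=
              congrArg (Finsupp.linearCombination A id) truncate_eq
          _ = x := hs x }
  exact ⟨_, hφ.isCompl⟩

theorem exists_le_isComplemented_spanRank_le [Module.Projective A P] (N : Submodule A P) :
    ∃ N', N ≤ N' ∧ IsComplemented N' ∧ N'.spanRank ≤ max ℵ₀ N.spanRank := by
  obtain ⟨s, hs⟩ := Module.projective_def.1 ‹Module.Projective A P›
  obtain ⟨T, hNT, hT_card, hT_closed⟩ := exists_superset_closed_mk_le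
    (fun x => ((s x).support : Set P)) (fun x => (s x).support.countable_toSet) N.generators
  refine ⟨span A T, ?_, isComplemented_span_of_support_subset hs hT_closed, ?_⟩
  · rw [← N.span_generators]
    exact span_mono hNT
  · rw [← N.generators_card]
    exact (spanRank_span_le_card T).trans hT_card

end Projective

section Socle

variable {A M : Type*} [Ring A] [AddCommGroup M] [Module A M]

instance isSemisimpleModule_moduleSocle_s8 : IsSemisimpleModule A (moduleSocle A M) := by
  rw [moduleSocle, sSup_eq_iSup]
  refine isSemisimpleModule_biSup_of_isSemisimpleModule_submodule fun W hW => ?_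
  have : IsSimpleModule A W := hW
  infer_instance

theorem map_moduleSocle_le_of_injective {N : Type*} [AddCommGroup N] [Module A N]
    {f : M →ₗ[A] N} (hf : Injective f) : (moduleSocle A M).map f ≤ moduleSocle A N := by
  refine map_le_iff_le_comap.2 (sSup_le fun W hW => map_le_iff_le_comap.1 (le_sSup ?_))
  exact (equivMapOfInjective f hf W).isSimpleModule_iff.1 hW

theorem exists_isAtom_of_moduleSocle_ne_bot (h : moduleSocle A M ≠ ⊥) :
    ∃ W : Submodule A M, IsAtom W := by
  contrapose! h
  exact sSup_eq_bot.2 fun W hW => (h W (isSimpleModule_iff_isAtom.1 hW)).elim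

theorem eq_bot_of_disjoint_moduleSocle [IsAtomic (Submodule A M)] {N : Submodule A M}
    (h : Disjoint N (moduleSocle A M)) : N = ⊥ := by
  refine (eq_bot_or_exists_atom_le N).resolve_right ?_
  rintro ⟨W, hW, hWN⟩
  exact hW.1 (le_bot_iff.1 (h hWN (le_sSup (isSimpleModule_iff_isAtom.2 hW))))

theorem spanRank_le_of_le_of_isSemisimpleModule {N K : Submodule A M} [IsSemisimpleModule A K]
    (h : N ≤ K) : N.spanRank ≤ K.spanRank := by
  obtain ⟨ρ, hρ⟩ :=
    IsSemisimpleModule.extension_property (inclusion h) (inclusion_injective h) LinearMap.id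
  have hρ_range : LinearMap.range ρ = ⊤ :=
    LinearMap.range_eq_top.2 (LinearMap.surjective_of_comp_eq_id _ _ hρ)
  simpa only [hρ_range, spanRank_top] using spanRank_range_le ρ

theorem spanRank_moduleSocle_submodule_le (N : Submodule A M) :
    (moduleSocle A N).spanRank ≤ (moduleSocle A M).spanRank := by
  rw [← spanRank_map_eq_of_injective _ N.subtype_injective]
  exact spanRank_le_of_le_of_isSemisimpleModule
    (map_moduleSocle_le_of_injective N.subtype_injective)

theorem spanRank_top_le_moduleSocle_of_projective [Module.Projective A M]
    [IsAtomic (Submodule A M)] :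
    (⊤ : Submodule A M).spanRank ≤ max ℵ₀ (moduleSocle A M).spanRank := by
  obtain ⟨N, hN, ⟨Q, hNQ⟩, hN_rank⟩ := exists_le_isComplemented_spanRank_le (moduleSocle A M)
  have hQ : Q = ⊥ := eq_bot_of_disjoint_moduleSocle (hNQ.disjoint.symm.mono_right hN)
  have hN_top : N = ⊤ := by simpa only [hQ, sup_bot_eq] using hNQ.sup_eq_top
  rwa [← hN_top]

theorem projective_ideal_countably_generated_general [IsAtomic (Submodule A M)]
    (N : Submodule A M) [Module.Projective A N] :
    N.spanRank ≤ max ℵ₀ (moduleSocle A M).spanRank := by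
  have : IsAtomic (Submodule A N) := N.mapIic.isAtomic_iff.2 inferInstance
  calc N.spanRank = (⊤ : Submodule A N).spanRank := N.spanRank_top.symm
    _ ≤ max ℵ₀ (moduleSocle A N).spanRank := spanRank_top_le_moduleSocle_of_projective
    _ ≤ max ℵ₀ (moduleSocle A M).spanRank :=
      max_le_max_left _ (spanRank_moduleSocle_submodule_le N)

end Socle

section Semiartinian

variable {R : Type*} [Ring R]

theorem IsRightSemiartinian.moduleSocle_ne_bot (hR : IsRightSemiartinian R) (M : Type*)
    [AddCommGroup M] [Module Rᵐᵒᵖ M] [Nontrivial M] : moduleSocle Rᵐᵒᵖ M ≠ ⊥ := by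
  obtain ⟨m, hm⟩ := exists_ne (0 : M)
  let f : R →ₗ[Rᵐᵒᵖ] M :=
    { toFun := fun r => MulOpposite.op r • m
      map_add' := fun r s => by rw [MulOpposite.op_add, add_smul]
      map_smul' := fun c r => mul_smul c (MulOpposite.op r) m }
  have ker_ne_top : LinearMap.ker f ≠ ⊤ := fun h => hm <| by
    simpa [f] using LinearMap.congr_fun (LinearMap.ker_eq_top.1 h) 1
  let g : (R ⧸ LinearMap.ker f) →ₗ[Rᵐᵒᵖ] M := (LinearMap.ker f).liftQ f le_rfl
  have g_injective : Injective g := LinearMap.ker_eq_bot.1 (ker_liftQ_eq_bot _ _ _ le_rfl)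
  intro h
  have map_socle_eq_bot : (moduleSocle Rᵐᵒᵖ (R ⧸ LinearMap.ker f)).map g = ⊥ :=
    le_bot_iff.1 (h ▸ map_moduleSocle_le_of_injective g_injective)
  exact hR _ ker_ne_top <| map_injective_of_injective g_injective <|
    map_socle_eq_bot.trans (Submodule.map_bot g).symm

theorem IsRightSemiartinian.isAtomic_submodule (hR : IsRightSemiartinian R) (M : Type*)
    [AddCommGroup M] [Module Rᵐᵒᵖ M] : IsAtomic (Submodule Rᵐᵒᵖ M) where
  eq_bot_or_exists_atom_le N := by
    refine or_iff_not_imp_left.2 fun hN => ?_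
    have : Nontrivial N := nontrivial_iff_ne_bot.2 hN
    obtain ⟨W, hW⟩ := exists_isAtom_of_moduleSocle_ne_bot (hR.moduleSocle_ne_bot N)
    have hW' : IsAtom (W.map N.subtype) := by
      rw [← isSimpleModule_iff_isAtom] at hW ⊢
      exact (N.equivSubtypeMap W).symm.isSimpleModule_iff.2 hW
    exact ⟨W.map N.subtype, hW', N.map_subtype_le W⟩

end Semiartinian

/-- key step in the proof of Lemma 9: over a von Neumann regular right
semiartinian ring with countably generated socle, every projective right ideal is
countably generated. -/
theorem projective_ideal_countably_generated (R : Type u) [Ring R]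
    (hvnr : IsVNRegular R) (hsa : IsRightSemiartinian R)
    (hsoc : ∃ S : Set R, S.Countable ∧ Submodule.span Rᵐᵒᵖ S = moduleSocle Rᵐᵒᵖ R)
    (I : Submodule Rᵐᵒᵖ R) (hI : Module.Projective Rᵐᵒᵖ ↥I) :
    ∃ S : Set R, S.Countable ∧ Submodule.span Rᵐᵒᵖ S = I := by
  have : IsAtomic (Submodule Rᵐᵒᵖ R) := hsa.isAtomic_submodule R
  simp only [← le_aleph0_iff_set_countable, ← FG.spanRank_le_iff_exists_span_set_card_le]
    at hsoc ⊢
  exact (projective_ideal_countably_generated_general I).trans (max_le le_rfl hsoc)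
end
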